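/- Let m ≥ 1 and h_1 ≥ h_2 ≥ … ≥ h_m ≥ 0, and let F = {(z,x) ∈ ℝ_{≥0} × {0,1}^m : for every i ∈ {1,…,m}, x_i = 0 implies z ≥ h_i} be the mixing set. Then the convex hull of F (taken in ℝ^{1+m}) equals the set of all (z,x) ∈ ℝ_{≥0} × [0,1]^m such that for every l ≥ 1 and every choice of indices 1 ≤ t_1 < t_2 < … < t_l ≤ m, the star inequality z + Σ_{ι=1}^{l} (h_{t_ι} − h_{t_{ι+1}}) x_{t_ι} ≥ h_{t_1} holds, with the convention h_{t_{l+1}} := 0. -/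

import Mathlib

/-!
For a chain of indices `t`, let `dᵢ ≥ 0` be the drop from `h (t i)` to its successor, with a final
drop to `0`. Tail sums telescope, `∑ i ≥ k, dᵢ = h (t k)`, so the star inequality of `t` reads
`∑ dᵢ (1 - x (t i)) ≤ z`, and it holds on the mixing set because the drops of the entries with
`x (t i) = 0` sum to at most the `h` of the first such entry.

Conversely, every `x ∈ [0, 1]ⁿ` is a convex combination of its threshold vectors `1[θ ≤ x]`, again
by telescoping. Take for `t` the strict left-to-right minima of `x`. Lift a threshold vector `u` to
the height `s + ∑ dᵢ (1 - u (t i))`, where `s ≥ 0` is the slack of the star inequality of `t` at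
`(z, x)`: this is affine in `u` and gives `z` at `u = x`. Along `t` the vector `u` consists of ones
followed by zeros, so the height is at least `h (t k)` for every `k` with `u (t k) = 0`; as every
index `i` with `u i = 0` is preceded by such a `t k`, the lift lies in the mixing set.
-/

section ConsecutiveDrop

/-- The drop `a i - a (i + 1)` of a finite sequence at `i`, where the sequence is continued by `0`
past its last term. These are the coefficients of a star inequality. -/
def consecutiveDrop {G : Type*} [Zero G] [Sub G] {n : ℕ} (a : Fin n → G) (i : Fin n) : G :=
  a i - if hi : (i : ℕ) + 1 < n then a ⟨(i : ℕ) + 1, hi⟩ else 0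

theorem sum_Ici_consecutiveDrop {G : Type*} [AddCommGroup G] {n : ℕ} (a : Fin n → G) (k : Fin n) :
    ∑ i ∈ Finset.Ici k, consecutiveDrop a i = a k := by
  let g : ℕ → G := fun j => if hj : j < n then a ⟨j, hj⟩ else 0
  have drop_eq (i : Fin n) : consecutiveDrop a i = -(g (i + 1) - g i) := by
    simp [consecutiveDrop, g]
  calc ∑ i ∈ Finset.Ici k, consecutiveDrop a i
      = ∑ j ∈ Finset.Ico (k : ℕ) n, -(g (j + 1) - g j) := by
        simp only [drop_eq, ← Fin.map_valEmbedding_Ici, Finset.sum_map, Fin.valEmbedding_apply]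
    _ = g k - g n := by
        rw [Finset.sum_neg_distrib, Finset.sum_Ico_sub g k.isLt.le, neg_sub]
    _ = a k := by simp [g]

theorem sum_consecutiveDrop {G : Type*} [AddCommGroup G] {n : ℕ} (a : Fin (n + 1) → G) :
    ∑ i, consecutiveDrop a i = a 0 := by
  rw [← sum_Ici_consecutiveDrop a 0, ← bot_eq_zero (α := Fin (n + 1)), Finset.Ici_bot]

theorem consecutiveDrop_nonneg {G : Type*} [AddCommGroup G] [PartialOrder G]
    [IsOrderedAddMonoid G] {n : ℕ} {a : Fin n → G} (ha : Antitone a) (ha₀ : ∀ i, 0 ≤ a i)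
    (i : Fin n) : 0 ≤ consecutiveDrop a i := by
  unfold consecutiveDrop
  split_ifs with hi
  · exact sub_nonneg.2 (ha (Fin.mk_le_mk.2 (Nat.le_succ i)))
  · simpa using ha₀ i

variable {R : Type*} [Ring R] [PartialOrder R] [IsOrderedRing R] {n : ℕ} {a : Fin n → R}

theorem sum_consecutiveDrop_mul_le (ha : Antitone a) (ha₀ : ∀ i, 0 ≤ a i) {v : Fin n → R} {z : R}
    (hz : 0 ≤ z) (hv : ∀ i, v i ≤ 1) (hvz : ∀ i, v i ≤ 0 ∨ a i ≤ z) :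
    ∑ i, consecutiveDrop a i * v i ≤ z := by
  have drop_nonneg := consecutiveDrop_nonneg ha ha₀
  by_cases hnonpos : ∀ i, v i ≤ 0
  · exact (Finset.sum_nonpos fun i _ =>
      mul_nonpos_of_nonneg_of_nonpos (drop_nonneg i) (hnonpos i)).trans hz
  · obtain ⟨k, hk, hk_min⟩ := WellFounded.has_min (r := (· < ·)) wellFounded_lt
      {i | ¬v i ≤ 0} (not_forall.1 hnonpos)
    calc ∑ i, consecutiveDrop a i * v i
        ≤ ∑ i, if k ≤ i then consecutiveDrop a i else 0 := by
          refine Finset.sum_le_sum fun i _ => ?_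
          split_ifs with hki
          · exact mul_le_of_le_one_right (drop_nonneg i) (hv i)
          · exact mul_nonpos_of_nonneg_of_nonpos (drop_nonneg i)
              (of_not_not fun hi => hk_min i hi (not_le.1 hki))
      _ = a k := by
          rw [← Finset.sum_filter, Finset.filter_le_eq_Ici, sum_Ici_consecutiveDrop]
      _ ≤ z := (hvz k).resolve_left hk

theorem le_sum_consecutiveDrop_mul (ha : Antitone a) (ha₀ : ∀ i, 0 ≤ a i) {v : Fin n → R}
    (hv : ∀ i, 0 ≤ v i) {k : Fin n} (hk : ∀ i, k ≤ i → 1 ≤ v i) :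
    a k ≤ ∑ i, consecutiveDrop a i * v i := by
  have drop_nonneg := consecutiveDrop_nonneg ha ha₀
  calc a k = ∑ i ∈ Finset.Ici k, consecutiveDrop a i := (sum_Ici_consecutiveDrop a k).symm
    _ ≤ ∑ i ∈ Finset.Ici k, consecutiveDrop a i * v i := Finset.sum_le_sum fun i hi =>
        le_mul_of_one_le_right (drop_nonneg i) (hk i (Finset.mem_Ici.1 hi))
    _ ≤ ∑ i, consecutiveDrop a i * v i :=
        Finset.sum_le_univ_sum_of_nonneg fun i => mul_nonneg (drop_nonneg i) (hv i)

theorem le_add_sum_consecutiveDrop_mul_iff (a y : Fin (n + 1) → R) (z : R) :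
    a 0 ≤ z + ∑ i, consecutiveDrop a i * y i ↔ ∑ i, consecutiveDrop a i * (1 - y i) ≤ z := by
  simp only [mul_sub, mul_one, Finset.sum_sub_distrib, sum_consecutiveDrop, sub_le_iff_le_add]

theorem sum_consecutiveDrop_mul_ite_le {R : Type*} [NonAssocRing R] [Preorder R] [DecidableLE R]
    {n : ℕ} {a : Fin n → R} (ha : StrictAnti a) (k : Fin n) :
    ∑ i, consecutiveDrop a i * (if a i ≤ a k then 1 else 0) = a k := by
  simp only [ha.le_iff_ge, mul_ite, mul_one, mul_zero]
  rw [← Finset.sum_filter, Finset.filter_le_eq_Ici, sum_Ici_consecutiveDrop]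

end ConsecutiveDrop

/-- The indicator vector of the superlevel set `{i | θ ≤ x i}`. A point of the cube is written as a
convex combination of its threshold vectors. -/
def thresholdVector {ι R : Type*} [Zero R] [One R] [LinearOrder R] (x : ι → R) (θ : R) : ι → R :=
  fun i => if θ ≤ x i then 1 else 0

theorem thresholdVector_eq_zero_iff {ι R : Type*} [Zero R] [One R] [NeZero (1 : R)]
    [LinearOrder R] {x : ι → R} {θ : R} {i : ι} : thresholdVector x θ i = 0 ↔ x i < θ := by
  simp [thresholdVector]

theorem thresholdVector_eq_zero_or_one {ι R : Type*} [Zero R] [One R] [LinearOrder R]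
    (x : ι → R) (θ : R) (i : ι) : thresholdVector x θ i = 0 ∨ thresholdVector x θ i = 1 :=
  (ite_eq_or_eq _ _ _).symm

theorem exists_strictAnti_range_eq {α : Type*} [LinearOrder α] (s : Finset α) :
    ∃ a : Fin s.card → α, StrictAnti a ∧ Set.range a = s :=
  ⟨s.orderEmbOfFin rfl ∘ Fin.rev,
    (s.orderEmbOfFin rfl).strictMono.comp_strictAnti Fin.rev_strictAnti, by
      rw [Fin.rev_surjective.range_comp, Finset.range_orderEmbOfFin]⟩

theorem mem_convexHull_range_thresholdVector {𝕜 ι : Type*} [Field 𝕜] [LinearOrder 𝕜]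
    [IsStrictOrderedRing 𝕜] [Finite ι] {x : ι → 𝕜} (hx : ∀ i, 0 ≤ x i ∧ x i ≤ 1) :
    x ∈ convexHull 𝕜 (Set.range (thresholdVector x)) := by
  classical
  have levels_finite : (insert 1 (Set.range x)).Finite := (Set.finite_range x).insert 1
  obtain ⟨a, ha, ha_range⟩ := exists_strictAnti_range_eq levels_finite.toFinset
  rw [Set.Finite.coe_toFinset] at ha_range
  have ha_mem (i) : 0 ≤ a i ∧ a i ≤ 1 := by
    rcases ha_range ▸ Set.mem_range_self i with h_one | ⟨j, hj⟩
    · simp [h_one]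
    · exact hj ▸ hx j
  have layer_cake {s : 𝕜} (hs : s ∈ insert 1 (Set.range x)) :
      ∑ i, consecutiveDrop a i * (if a i ≤ s then 1 else 0) = s := by
    obtain ⟨k, rfl⟩ := ha_range ▸ hs
    exact sum_consecutiveDrop_mul_ite_le ha k
  refine mem_convexHull_of_exists_fintype (consecutiveDrop a) (fun i => thresholdVector x (a i))
    (consecutiveDrop_nonneg ha.antitone fun i => (ha_mem i).1) ?_ (fun i => ⟨a i, rfl⟩) ?_
  · simpa [ha_mem] using layer_cake (Set.mem_insert 1 _)
  · ext j
    simpa [thresholdVector] using layer_cake (Set.mem_insert_of_mem _ ⟨j, rfl⟩)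

theorem exists_leftToRightMinima {ι β : Type*} [LinearOrder ι] [Finite ι] [LinearOrder β]
    (x : ι → β) :
    ∃ (n : ℕ) (t : Fin n → ι), StrictMono t ∧ StrictAnti (x ∘ t) ∧
      ∀ i, ∃ k, t k ≤ i ∧ x (t k) ≤ x i := by
  have minima_finite : {i | ∀ j < i, x i < x j}.Finite := Set.toFinite _
  let t := minima_finite.toFinset.orderEmbOfFin rfl
  have ht_range : Set.range t = {i | ∀ j < i, x i < x j} := by
    rw [Finset.range_orderEmbOfFin, Set.Finite.coe_toFinset]
  have ht_mem (k) : ∀ j < t k, x (t k) < x j := ht_range.subset (Set.mem_range_self k)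
  refine ⟨_, t, t.strictMono, fun k l hkl => ht_mem l (t k) (t.strictMono hkl), fun i => ?_⟩
  obtain ⟨j, ⟨hji, hxj⟩, hj_min⟩ := WellFounded.has_min (r := (· < ·)) wellFounded_lt
    {j | j ≤ i ∧ x j ≤ x i} ⟨i, le_rfl, le_rfl⟩
  obtain ⟨k, rfl⟩ : j ∈ Set.range t := by
    rw [ht_range]
    exact fun k hkj => hxj.trans_lt <| not_le.1 fun hxk => hj_min k ⟨hkj.le.trans hji, hxk⟩ hkj
  exact ⟨k, hji, hxj⟩

theorem mem_convexHull_of_linear_lift {𝕜 E F : Type*} [Ring 𝕜] [PartialOrder 𝕜]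
    [AddCommGroup E] [Module 𝕜 E] [AddCommGroup F] [Module 𝕜 F] (L : E →ₗ[𝕜] F) {s : Set E}
    {t : Set (F × E)} {x : E} {z : F} (hx : x ∈ convexHull 𝕜 s)
    (hst : ∀ u ∈ s, (z + L (x - u), u) ∈ t) : (z, x) ∈ convexHull 𝕜 t := by
  let lift : E →ᵃ[𝕜] F × E :=
    (AffineMap.const 𝕜 E (z + L x) - L.toAffineMap).prod (AffineMap.id 𝕜 E)
  have lift_apply (u : E) : lift u = (z + L (x - u), u) := by simp [lift, add_sub_assoc]
  have hmem : lift x ∈ convexHull 𝕜 (lift '' s) :=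
    lift.image_convexHull s ▸ Set.mem_image_of_mem lift hx
  rw [lift_apply, sub_self, map_zero, add_zero] at hmem
  refine convexHull_mono ?_ hmem
  rintro _ ⟨u, hu, rfl⟩
  exact lift_apply u ▸ hst u hu

section Mixing

variable {ι R : Type*}

/-- The mixing set with levels `h`. A point is a pair `(z, x)`, and the constraint `x ∈ {0, 1}^ι`
is kept coordinatewise so that the ambient space is a module. -/
def mixingSet [Zero R] [One R] [LE R] (h : ι → R) : Set (R × (ι → R)) :=
  {w | 0 ≤ w.1 ∧ (∀ i, w.2 i = 0 ∨ w.2 i = 1) ∧ ∀ i, w.2 i = 0 → h i ≤ w.1}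

/-- The polyhedron of pairs `(z, x)` cut out by the bounds `0 ≤ z`, `0 ≤ x ≤ 1` and the star
inequalities of `h`, one for each nonempty chain of indices, which is encoded as a strictly
increasing `t : Fin (l + 1) → ι`. -/
def starPolyhedron [Ring R] [LE R] [Preorder ι] (h : ι → R) : Set (R × (ι → R)) :=
  {w | 0 ≤ w.1 ∧ (∀ i, 0 ≤ w.2 i ∧ w.2 i ≤ 1) ∧
    ∀ (l : ℕ) (t : Fin (l + 1) → ι), StrictMono t →
      h (t 0) ≤ w.1 + ∑ i, consecutiveDrop (h ∘ t) i * w.2 (t i)}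

theorem mixingSet_subset_starPolyhedron [Ring R] [PartialOrder R] [IsOrderedRing R] [Preorder ι]
    {h : ι → R} (hmono : Antitone h) (hnonneg : ∀ i, 0 ≤ h i) :
    mixingSet h ⊆ starPolyhedron h := by
  rintro ⟨z, x⟩ ⟨hz, hx, hxz⟩
  dsimp only at hz hx hxz
  have hx_mem (i) : 0 ≤ x i ∧ x i ≤ 1 := by rcases hx i with hi | hi <;> simp [hi]
  refine ⟨hz, hx_mem, fun l t ht => (le_add_sum_consecutiveDrop_mul_iff (h ∘ t) (x ∘ t) z).2 ?_⟩
  refine sum_consecutiveDrop_mul_le (hmono.comp_monotone ht.monotone) (fun i => hnonneg (t i)) hz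
    (fun i => sub_le_self 1 (hx_mem (t i)).1) fun i => ?_
  exact (hx (t i)).symm.imp (fun hi => (sub_eq_zero.2 hi.symm).le) (hxz (t i))

theorem convex_starPolyhedron [CommRing R] [PartialOrder R] [IsOrderedRing R] [Preorder ι]
    (h : ι → R) : Convex R (starPolyhedron h) := by
  have star_linear {l : ℕ} (t : Fin (l + 1) → ι) : IsLinearMap R fun w : R × (ι → R) =>
      w.1 + ∑ i, consecutiveDrop (h ∘ t) i * w.2 (t i) :=
    ⟨fun v w => by simp [mul_add, Finset.sum_add_distrib, add_add_add_comm],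
      fun c w => by simp [mul_add, Finset.mul_sum, mul_left_comm]⟩
  have box_convex := (convex_Ici (𝕜 := R) (0 : R)).prod
    (convex_pi (s := Set.univ) fun (i : ι) _ => convex_Icc (𝕜 := R) (0 : R) 1)
  have stars_convex := convex_iInter fun l => convex_iInter fun t : Fin (l + 1) → ι =>
    convex_iInter fun _ : StrictMono t => convex_halfSpace_ge (star_linear t) (h (t 0))
  convert box_convex.inter stars_convex using 1
  ext w
  simp [starPolyhedron, Pi.le_def, forall_and, and_assoc]

theorem sum_consecutiveDrop_mul_one_sub_le_of_mem_starPolyhedron [Ring R] [PartialOrder R]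
    [IsOrderedRing R] [Preorder ι] {h : ι → R} {z : R} {x : ι → R}
    (hzx : (z, x) ∈ starPolyhedron h) {n : ℕ} {t : Fin n → ι} (ht : StrictMono t) :
    ∑ i, consecutiveDrop (h ∘ t) i * (1 - x (t i)) ≤ z := by
  obtain ⟨hz, -, hstar⟩ := hzx
  cases n with
  | zero => simpa using hz
  | succ l => exact (le_add_sum_consecutiveDrop_mul_iff (h ∘ t) (x ∘ t) z).1 (hstar l t ht)

theorem mem_mixingSet_of_thresholdVector [Ring R] [Nontrivial R] [LinearOrder R] [IsOrderedRing R]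
    [Preorder ι] {h : ι → R} (hmono : Antitone h) (hnonneg : ∀ i, 0 ≤ h i) {x : ι → R} {n : ℕ}
    {t : Fin n → ι} (ht : StrictMono t) (hxt : Antitone (x ∘ t))
    (hcover : ∀ i, ∃ k, t k ≤ i ∧ x (t k) ≤ x i) {y θ : R}
    (hy : ∑ i, consecutiveDrop (h ∘ t) i * (1 - thresholdVector x θ (t i)) ≤ y) :
    (y, thresholdVector x θ) ∈ mixingSet h := by
  have hht : Antitone (h ∘ t) := hmono.comp_monotone ht.monotone
  have hht₀ (i) : 0 ≤ (h ∘ t) i := hnonneg (t i)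
  have one_sub_nonneg (i) : 0 ≤ 1 - thresholdVector x θ (t i) := by
    rcases thresholdVector_eq_zero_or_one x θ (t i) with hi | hi <;> simp [hi]
  refine ⟨?_, thresholdVector_eq_zero_or_one x θ, fun i hi => ?_⟩
  · exact hy.trans' <| Finset.sum_nonneg fun i _ =>
      mul_nonneg (consecutiveDrop_nonneg hht hht₀ i) (one_sub_nonneg i)
  · obtain ⟨k, hki, hxk⟩ := hcover i
    have hxi : x i < θ := thresholdVector_eq_zero_iff.1 hi
    have zero_after (j) (hkj : k ≤ j) : thresholdVector x θ (t j) = 0 :=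
      thresholdVector_eq_zero_iff.2 <| ((hxt hkj).trans hxk).trans_lt hxi
    calc h i ≤ h (t k) := hmono hki
      _ ≤ ∑ j, consecutiveDrop (h ∘ t) j * (1 - thresholdVector x θ (t j)) :=
          le_sum_consecutiveDrop_mul hht hht₀ one_sub_nonneg fun j hkj => by
            rw [zero_after j hkj, sub_zero]
      _ ≤ y := hy

theorem starPolyhedron_subset_convexHull_mixingSet {𝕜 : Type*} [Field 𝕜] [LinearOrder 𝕜]
    [IsStrictOrderedRing 𝕜] [LinearOrder ι] [Finite ι] {h : ι → 𝕜} (hmono : Antitone h)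
    (hnonneg : ∀ i, 0 ≤ h i) : starPolyhedron h ⊆ convexHull 𝕜 (mixingSet h) := by
  rintro ⟨z, x⟩ hzx
  obtain ⟨n, t, ht, hxt, hcover⟩ := exists_leftToRightMinima x
  let d := consecutiveDrop (h ∘ t)
  let L : (ι → 𝕜) →ₗ[𝕜] 𝕜 := ∑ i, d i • LinearMap.proj (t i)
  refine mem_convexHull_of_linear_lift L (mem_convexHull_range_thresholdVector hzx.2.1) ?_
  rintro _ ⟨θ, rfl⟩
  refine mem_mixingSet_of_thresholdVector hmono hnonneg ht hxt.antitone hcover ?_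
  calc ∑ i, d i * (1 - thresholdVector x θ (t i))
      = ∑ i, d i * (1 - x (t i)) + L (x - thresholdVector x θ) := by
        simp [L, ← Finset.sum_add_distrib, ← mul_add]
    _ ≤ z + L (x - thresholdVector x θ) := by
        gcongr
        exact sum_consecutiveDrop_mul_one_sub_le_of_mem_starPolyhedron hzx ht

theorem convexHull_mixing_eq_star_inequalities_general {𝕜 : Type*} [Field 𝕜] [LinearOrder 𝕜]
    [IsStrictOrderedRing 𝕜] [LinearOrder ι] [Finite ι] {h : ι → 𝕜} (hmono : Antitone h)
    (hnonneg : ∀ i, 0 ≤ h i) : convexHull 𝕜 (mixingSet h) = starPolyhedron h :=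
  (convexHull_min (mixingSet_subset_starPolyhedron hmono hnonneg)
    (convex_starPolyhedron h)).antisymm (starPolyhedron_subset_convexHull_mixingSet hmono hnonneg)

end Mixing

/-- **The star inequalities describe the convex hull of the mixing set.**
For `m ≥ 1` and `h` antitone and nonnegative on `Fin m`, the convex hull of
`F = {(z,x) ∈ ℝ₊ × {0,1}^m : x i = 0 → z ≥ h i}` equals the set of all
`(z,x) ∈ ℝ₊ × [0,1]^m` satisfying every star inequality
`z + ∑_ι (h (t ι) − h (t (ι+1))) x (t ι) ≥ h (t 0)` over all `l ≥ 0` and all strictly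
increasing `t : Fin (l+1) → Fin m`, with the convention that the term following the
last index is `0`. -/
theorem convexHull_mixing_eq_star_inequalities
    (m : ℕ) (hm : 1 ≤ m) (h : Fin m → ℝ)
    (hmono : Antitone h) (hnonneg : ∀ i, 0 ≤ h i) :
    convexHull ℝ {w : ℝ × (Fin m → ℝ) |
        0 ≤ w.1 ∧ (∀ i, w.2 i = 0 ∨ w.2 i = 1) ∧ (∀ i, w.2 i = 0 → h i ≤ w.1)}
      = {w : ℝ × (Fin m → ℝ) |
          0 ≤ w.1 ∧ (∀ i, 0 ≤ w.2 i ∧ w.2 i ≤ 1) ∧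
          ∀ (l : ℕ) (t : Fin (l + 1) → Fin m), StrictMono t →
            h (t 0) ≤ w.1 + ∑ ι : Fin (l + 1),
              (h (t ι) - (if hlt : (ι : ℕ) + 1 < l + 1 then h (t ⟨(ι : ℕ) + 1, hlt⟩)
                else 0)) * w.2 (t ι)} :=
  convexHull_mixing_eq_star_inequalities_general hmono hnonneg
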